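/- arXiv:2405.02838 — 4 statements merged into one kernel-verified Lean document; each statement's English description precedes it below -/
import Mathlib

section
/- Let (q₁,…,qₙ) be a multi-index of nonnegative integers with q = q₁+⋯+qₙ ≤ m. Then D_{(q₁,…,qₙ;q)} := c(m) ∫_{ℂⁿ} |ν₁|^{2q₁} ⋯ |νₙ|^{2qₙ} (1+‖ν‖²)^{-(m+n+1)} dλ(ν) = (q₁! ⋯ qₙ! · (m−q)!) / m!. Equivalently, the squared ⟨·,·⟩ₘ-norm of the monomial ν ↦ ν₁^{q₁}⋯νₙ^{qₙ} equals the reciprocal of the multinomial coefficient m!/(q₁!⋯qₙ!(m−q)!). -/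
open MeasureTheory

/-- The normalizing constant `c(m)`, with
`c(m)⁻¹ = ∫_{ℂⁿ} (1+‖ν‖²)^{-(m+n+1)} dλ(ν)`. -/
noncomputable def cconst (n m : ℕ) : ℝ :=
  (∫ ν : Fin n → ℂ, ((1 + ∑ j, Complex.normSq (ν j)) ^ (m + n + 1))⁻¹)⁻¹

lemma aux_gamma (k : ℕ) {r : ℝ} (hr : 0 < r) :
    ∫ t : ℝ in Set.Ioi 0, t ^ k * Real.exp (-(r * t)) = (k.factorial : ℝ) * (r ^ (k + 1))⁻¹ := by
  have h := Real.integral_rpow_mul_exp_neg_mul_Ioi (a := (k : ℝ) + 1) (r := r) (by positivity) hr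
  rw [Real.Gamma_nat_eq_factorial] at h
  simp only [add_sub_cancel_right, Real.rpow_natCast] at h
  rw [h]
  have : ((1 / r : ℝ)) ^ ((k : ℝ) + 1) = (r ^ (k + 1))⁻¹ := by
    rw [← Nat.cast_succ, Real.rpow_natCast, one_div, inv_pow]
  rw [this, mul_comm]

lemma aux_gauss (k : ℕ) {t : ℝ} (ht : 0 < t) :
    ∫ z : ℂ, Complex.normSq z ^ k * Real.exp (-(t * Complex.normSq z)) =
      Real.pi * (k.factorial : ℝ) * (t ^ (k + 1))⁻¹ := by
  have h := Complex.integral_rpow_mul_exp_neg_mul_rpow (p := 2) (q := 2 * (k : ℝ)) (b := t)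
    (by norm_num) (by have : (0 : ℝ) ≤ k := by positivity
                      linarith) ht
  have e1 : (2 * (k : ℝ) + 2) / 2 = k + 1 := by ring
  have e2 : -(2 * (k : ℝ) + 2) / 2 = -((k + 1 : ℕ) : ℝ) := by push_cast; ring
  rw [e1, e2, Real.Gamma_nat_eq_factorial, Real.rpow_neg ht.le, Real.rpow_natCast] at h
  have : ∀ z : ℂ, Complex.normSq z ^ k * Real.exp (-(t * Complex.normSq z)) =
      ‖z‖ ^ (2 * (k : ℝ)) * Real.exp (-t * ‖z‖ ^ (2 : ℝ)) := by
    intro z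
    rw [Real.rpow_mul (norm_nonneg z), Real.rpow_two, Real.rpow_natCast, Complex.normSq_eq_norm_sq,
      neg_mul]
  simp_rw [this]
  rw [h]
  ring

lemma aux_main (n m : ℕ) (q : Fin n → ℕ) (hq : ∑ j, q j ≤ m) :
    ((m + n).factorial : ℝ) * ∫ ν : Fin n → ℂ, (∏ j, Complex.normSq (ν j) ^ q j) *
        ((1 + ∑ j, Complex.normSq (ν j)) ^ (m + n + 1))⁻¹
    = Real.pi ^ n * ((∏ j, (q j).factorial : ℕ) : ℝ) * ((m - ∑ j, q j).factorial : ℝ) := by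
  let F : (Fin n → ℂ) → ℝ → ℝ := fun ν t => (t ^ (m + n) * Real.exp (-t)) *
    ∏ j, (Complex.normSq (ν j) ^ q j * Real.exp (-(t * Complex.normSq (ν j))))
  have hF1 : ∀ ν, ∫ t in Set.Ioi (0 : ℝ), F ν t = ((m + n).factorial : ℝ) *
      ((∏ j, Complex.normSq (ν j) ^ q j) *
        ((1 + ∑ j, Complex.normSq (ν j)) ^ (m + n + 1))⁻¹) := by
    intro ν
    have hs : 0 < 1 + ∑ j, Complex.normSq (ν j) := by
      have : 0 ≤ ∑ j, Complex.normSq (ν j) := Finset.sum_nonneg fun j _ => Complex.normSq_nonneg _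
      linarith
    have : ∀ t, F ν t = (∏ j, Complex.normSq (ν j) ^ q j) *
        (t ^ (m + n) * Real.exp (-((1 + ∑ j, Complex.normSq (ν j)) * t))) := by
      intro t
      have e : -((1 + ∑ j, Complex.normSq (ν j)) * t) =
          -t + ∑ j, -(t * Complex.normSq (ν j)) := by
        rw [Finset.sum_neg_distrib, ← Finset.mul_sum]; ring
      simp only [F]
      rw [Finset.prod_mul_distrib, e, Real.exp_add, Real.exp_sum]
      ring
    simp_rw [this]
    rw [integral_const_mul, aux_gamma _ hs]
    ring
  have hF2 : ∀ t ∈ Set.Ioi (0 : ℝ), ∫ ν, F ν t = Real.pi ^ n *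
      ((∏ j, (q j).factorial : ℕ) : ℝ) * (t ^ (m - ∑ j, q j) * Real.exp (-(1 * t))) := by
    intro t ht
    have ht : 0 < t := ht
    simp only [F]
    rw [integral_const_mul, integral_fintype_prod_volume_eq_prod
      (fun j (z : ℂ) => Complex.normSq z ^ q j * Real.exp (-(t * Complex.normSq z)))]
    simp_rw [aux_gauss _ ht]
    rw [Finset.prod_mul_distrib, Finset.prod_mul_distrib, Finset.prod_inv_distrib,
      Finset.prod_pow_eq_pow_sum, Finset.sum_add_distrib]
    have e : m + n = (m - ∑ j, q j) + (∑ j, q j + n) := by omega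
    rw [e, pow_add t (m - ∑ j, q j)]
    simp
    field_simp
  have hFnn : ∀ ν, ∀ t ∈ Set.Ioi (0 : ℝ), 0 ≤ F ν t := by
    intro ν t ht
    have ht : 0 < t := ht
    refine mul_nonneg (by positivity) (Finset.prod_nonneg fun j _ => ?_)
    exact mul_nonneg (pow_nonneg (Complex.normSq_nonneg _) _) (Real.exp_nonneg _)
  have hFint : Integrable (Function.uncurry F)
      ((volume : Measure (Fin n → ℂ)).prod (volume.restrict (Set.Ioi (0 : ℝ)))) := by
    have hc : Continuous (Function.uncurry F) := by
      have := Complex.continuous_normSq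
      simp only [F, Function.uncurry_def]
      fun_prop
    rw [integrable_prod_iff' hc.aestronglyMeasurable]
    constructor
    · filter_upwards [ae_restrict_mem measurableSet_Ioi] with t ht
      have ht : 0 < t := ht
      simp only [Function.uncurry_apply_pair, F]
      rw [volume_pi]
      refine Integrable.const_mul (Integrable.fintype_prod (μ := fun _ => volume)
        (f := fun j (z : ℂ) => Complex.normSq z ^ q j * Real.exp (-(t * Complex.normSq z)))
        fun j => ?_) _
      apply Integrable.of_integral_ne_zero
      rw [aux_gauss _ ht]
      positivity
    · have hg : Integrable (fun t : ℝ => Real.pi ^ n *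
          ((∏ j, (q j).factorial : ℕ) : ℝ) * (t ^ (m - ∑ j, q j) * Real.exp (-(1 * t))))
          (volume.restrict (Set.Ioi (0 : ℝ))) := by
        refine Integrable.const_mul ?_ _
        apply Integrable.of_integral_ne_zero
        rw [aux_gamma _ one_pos]
        positivity
      refine hg.congr ?_
      filter_upwards [ae_restrict_mem measurableSet_Ioi] with t ht
      rw [← hF2 t ht]
      refine integral_congr_ae (Filter.Eventually.of_forall fun ν => ?_)
      exact (Real.norm_of_nonneg (hFnn ν t ht)).symm
  have hswap := integral_integral_swap hFint
  simp_rw [hF1] at hswap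
  rw [integral_const_mul, setIntegral_congr_fun measurableSet_Ioi hF2, integral_const_mul,
    aux_gamma _ one_pos] at hswap
  rw [hswap]
  simp

/-- for a multi-index `(q₁,…,qₙ)` with `q = q₁+⋯+qₙ ≤ m`,
`D_{(q₁,…,qₙ;q)} = c(m) ∫_{ℂⁿ} |ν₁|^{2q₁}⋯|νₙ|^{2qₙ} (1+‖ν‖²)^{-(m+n+1)} dλ(ν)
 = q₁!⋯qₙ!(m−q)!/m!`, i.e. the squared weighted norm of the monomial `ν^q` is
the reciprocal of the multinomial coefficient `m!/(q₁!⋯qₙ!(m−q)!)`. -/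
theorem stmt_2 (n m : ℕ) (hn : 1 ≤ n) (q : Fin n → ℕ) (hq : ∑ j, q j ≤ m) :
    cconst n m *
      ∫ ν : Fin n → ℂ, (∏ j, Complex.normSq (ν j) ^ q j) *
        ((1 + ∑ j, Complex.normSq (ν j)) ^ (m + n + 1))⁻¹
    = ((∏ j, (q j).factorial : ℕ) : ℝ) * ((m - ∑ j, q j).factorial : ℝ) /
        (m.factorial : ℝ) := by
  have h1 := aux_main n m q hq
  have h0 := aux_main n m (fun _ => 0) (by simp)
  simp only [pow_zero, Finset.prod_const_one, one_mul, Nat.factorial_zero, Nat.cast_one, mul_one,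
    Finset.sum_const_zero, Nat.sub_zero] at h0
  have hN : ((m + n).factorial : ℝ) ≠ 0 := by positivity
  have hM : (m.factorial : ℝ) ≠ 0 := by positivity
  have hpi : Real.pi ^ n ≠ 0 := by positivity
  rw [mul_comm, ← eq_div_iff hN] at h1 h0
  rw [cconst, h1, h0]
  field_simp
end

section
/- Reproducing kernel property: for every polynomial function Ψ : ℂⁿ → ℂ of total degree at most m and every μ ∈ ℂⁿ, ⟨ψ_μ, Ψ⟩ₘ = c(m) ∫_{ℂⁿ} (1 + Σⱼ μⱼ·conj(νⱼ))^m · Ψ(ν) · (1+‖ν‖²)^{-(m+n+1)} dλ(ν) = Ψ(μ). In particular, ⟨ψ_μ, ψ_ν⟩ₘ = ψ_ν(μ) = (1 + ⟨ν,μ⟩)^m for all μ, ν ∈ ℂⁿ. -/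
open MeasureTheory

/-- The coherent state `ψ_μ(ν) = (1 + ⟨μ,ν⟩)^m` with `⟨μ,ν⟩ = Σⱼ conj(μⱼ)νⱼ`. -/
noncomputable def psiCS (n m : ℕ) (μ ν : Fin n → ℂ) : ℂ :=
  (1 + ∑ j, (starRingEnd ℂ) (μ j) * ν j) ^ m

/-- The weighted inner product
`⟨f,g⟩ₘ = c(m) ∫_{ℂⁿ} conj(f(ν)) g(ν) (1+‖ν‖²)^{-(m+n+1)} dλ(ν)`. -/
noncomputable def wInner (n m : ℕ) (f g : (Fin n → ℂ) → ℂ) : ℂ :=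
  ((cconst n m : ℝ) : ℂ) *
    ∫ ν : Fin n → ℂ, (starRingEnd ℂ) (f ν) * g ν *
      ((((1 + ∑ j, Complex.normSq (ν j)) ^ (m + n + 1) : ℝ) : ℂ))⁻¹


/-- Gamma integral with natural exponents. -/
lemma gammaInt (N : ℕ) {A : ℝ} (hA : 0 < A) :
    ∫ t in Set.Ioi (0:ℝ), t ^ N * Real.exp (-(t * A)) = N.factorial / A ^ (N + 1) := by
  have h := Real.integral_rpow_mul_exp_neg_mul_Ioi (a := (N:ℝ) + 1) (r := A) (by positivity) hA
  rw [Real.Gamma_nat_eq_factorial] at h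
  have e : (1 / A) ^ ((N:ℝ) + 1) = 1 / A ^ (N + 1) := by
    rw [show ((N:ℝ) + 1) = ((N + 1 : ℕ) : ℝ) by push_cast; rfl, Real.rpow_natCast]; simp
  rw [e] at h
  calc _ = ∫ t in Set.Ioi (0:ℝ), t ^ ((N:ℝ) + 1 - 1) * Real.exp (-(A * t)) := by
        refine setIntegral_congr_fun measurableSet_Ioi fun t _ => ?_
        simp only [add_sub_cancel_right, Real.rpow_natCast, mul_comm A t]
    _ = _ := by rw [h]; ring

lemma gammaIntegrable (N : ℕ) {A : ℝ} (hA : 0 < A) :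
    IntegrableOn (fun t : ℝ => t ^ N * Real.exp (-(t * A))) (Set.Ioi (0:ℝ)) := by
  by_contra h
  have := gammaInt N hA
  rw [integral_undef h] at this
  have : 0 < (N.factorial : ℝ) / A ^ (N + 1) := by positivity
  linarith

lemma radialInt (a : ℕ) {t : ℝ} (ht : 0 < t) :
    ∫ r in Set.Ioi (0:ℝ), r ^ (2 * a + 1) * Real.exp (-(t * r ^ 2)) =
      a.factorial / (2 * t ^ (a + 1)) := by
  have h := integral_rpow_mul_exp_neg_mul_rpow (p := 2) (q := 2 * a + 1) (b := t) two_pos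
    (by have : (0:ℝ) ≤ a := by positivity
        linarith) ht
  rw [show ((2 * a + 1 + 1 : ℝ) / 2) = a + 1 by ring, Real.Gamma_nat_eq_factorial,
    show (-(2 * a + 1 + 1 : ℝ) / 2) = -((a + 1 : ℕ) : ℝ) by push_cast; ring,
    Real.rpow_neg ht.le, Real.rpow_natCast] at h
  calc _ = ∫ r in Set.Ioi (0:ℝ), r ^ (2 * a + 1 : ℝ) * Real.exp (-t * r ^ (2:ℝ)) := by
        refine setIntegral_congr_fun measurableSet_Ioi fun r _ => ?_
        have : (2 * a + 1 : ℝ) = ((2 * a + 1 : ℕ) : ℝ) := by push_cast; rfl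
        simp only [this, Real.rpow_natCast, Real.rpow_two, neg_mul]
    _ = _ := by rw [h]; field_simp

lemma angularInt (a b : ℕ) :
    ∫ θ in Set.Ioo (-Real.pi) Real.pi, Complex.exp (((b:ℂ) - a) * Complex.I * θ) =
      if a = b then 2 * (Real.pi : ℂ) else 0 := by
  rw [← integral_Ioc_eq_integral_Ioo, ← intervalIntegral.integral_of_le
    (by linarith [Real.pi_pos])]
  split_ifs with h
  · subst h; simp; ring
  · have hne : ((b:ℂ) - a) * Complex.I ≠ 0 := by
      refine mul_ne_zero (sub_ne_zero.mpr ?_) Complex.I_ne_zero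
      exact_mod_cast Ne.symm h
    rw [integral_exp_mul_complex hne]
    have : Complex.exp (((b:ℂ) - a) * Complex.I * (Real.pi : ℝ)) =
        Complex.exp (((b:ℂ) - a) * Complex.I * ((-Real.pi : ℝ) : ℂ)) := by
      rw [Complex.exp_eq_exp_iff_exists_int]
      exact ⟨(b:ℤ) - a, by push_cast; ring⟩
    rw [this]; simp

lemma gauss1 (a b : ℕ) {t : ℝ} (ht : 0 < t) :
    ∫ z : ℂ, (starRingEnd ℂ) z ^ a * z ^ b * (Real.exp (-(t * Complex.normSq z)) : ℂ) =
      if a = b then (Real.pi * a.factorial / t ^ (a + 1) : ℂ) else 0 := by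
  rw [← Complex.integral_comp_polarCoord_symm]
  have key : ∀ p : ℝ × ℝ, p.1 • ((starRingEnd ℂ) (Complex.polarCoord.symm p) ^ a *
      (Complex.polarCoord.symm p) ^ b *
      (Real.exp (-(t * Complex.normSq (Complex.polarCoord.symm p))) : ℂ)) =
      ((p.1 ^ (a + b + 1) * Real.exp (-(t * p.1 ^ 2)) : ℝ) : ℂ) *
        Complex.exp (((b:ℂ) - a) * Complex.I * p.2) := by
    intro p
    have h1 : Complex.polarCoord.symm p = p.1 * Complex.exp (p.2 * Complex.I) := by
      rw [Complex.polarCoord_symm_apply, Complex.exp_mul_I]; simp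
    have h2 : (starRingEnd ℂ) (Complex.polarCoord.symm p) =
        p.1 * Complex.exp (-(p.2 * Complex.I)) := by
      rw [h1, map_mul, ← Complex.exp_conj]; simp
    have h3 : Complex.normSq (Complex.polarCoord.symm p) = p.1 ^ 2 := by
      rw [Complex.normSq_eq_norm_sq, Complex.norm_polarCoord_symm, sq_abs]
    rw [h3, h2, h1, mul_pow, mul_pow, ← Complex.exp_nat_mul, ← Complex.exp_nat_mul]
    have h4 : Complex.exp (((b:ℂ) - a) * Complex.I * p.2) =
      Complex.exp ((a:ℂ) * -(p.2 * Complex.I)) * Complex.exp ((b:ℂ) * (p.2 * Complex.I)) := by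
      rw [← Complex.exp_add]; congr 1; ring
    rw [h4, Complex.real_smul]
    push_cast
    ring
  simp_rw [key]
  rw [polarCoord_target, Measure.volume_eq_prod,
    setIntegral_prod_mul (fun r : ℝ => ((r ^ (a + b + 1) * Real.exp (-(t * r ^ 2)) : ℝ) : ℂ))
      (fun θ : ℝ => Complex.exp (((b:ℂ) - a) * Complex.I * θ)), angularInt]
  split_ifs with h
  · subst h
    rw [integral_complex_ofReal, ← two_mul, radialInt a ht]
    push_cast
    have : (t:ℂ) ≠ 0 := by exact_mod_cast ht.ne'
    field_simp
  · simp

lemma gaussN {n : ℕ} (α β : Fin n → ℕ) {t : ℝ} (ht : 0 < t) :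
    ∫ ν : Fin n → ℂ, (∏ j, (starRingEnd ℂ) (ν j) ^ α j) * (∏ j, ν j ^ β j) *
      (Real.exp (-(t * ∑ j, Complex.normSq (ν j))) : ℂ) =
      if α = β then (Real.pi ^ n * (∏ j, ((β j).factorial : ℂ)) / t ^ (∑ j, β j + n) : ℂ)
        else 0 := by
  have key : ∀ ν : Fin n → ℂ, (∏ j, (starRingEnd ℂ) (ν j) ^ α j) * (∏ j, ν j ^ β j) *
      (Real.exp (-(t * ∑ j, Complex.normSq (ν j))) : ℂ) =
      ∏ j, ((starRingEnd ℂ) (ν j) ^ α j * ν j ^ β j *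
        (Real.exp (-(t * Complex.normSq (ν j))) : ℂ)) := by
    intro ν
    rw [Finset.prod_mul_distrib, Finset.prod_mul_distrib, ← Complex.ofReal_prod, ← Real.exp_sum,
      Finset.mul_sum, Finset.sum_neg_distrib]
  simp_rw [key]
  rw [integral_fintype_prod_volume_eq_prod (fun j (z : ℂ) => (starRingEnd ℂ) z ^ α j * z ^ β j *
        (Real.exp (-(t * Complex.normSq z)) : ℂ))]
  simp_rw [gauss1 _ _ ht]
  split_ifs with h
  · subst h
    simp [Finset.prod_div_distrib, Finset.prod_mul_distrib, Finset.prod_pow_eq_pow_sum,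
      Finset.sum_add_distrib]
  · obtain ⟨j, hj⟩ := Function.ne_iff.mp h
    exact Finset.prod_eq_zero (Finset.mem_univ j) (by simp [hj])

lemma oneAdd_pos {n : ℕ} (ν : Fin n → ℂ) : 0 < 1 + ∑ j, Complex.normSq (ν j) := by
  have : 0 ≤ ∑ j, Complex.normSq (ν j) := Finset.sum_nonneg fun j _ => Complex.normSq_nonneg _
  linarith

lemma monoBound {n m : ℕ} (α β : Fin n → ℕ) (hα : ∑ j, α j ≤ m) (hβ : ∑ j, β j ≤ m)
    (ν : Fin n → ℂ) :
    ‖(∏ j, (starRingEnd ℂ) (ν j) ^ α j) * (∏ j, ν j ^ β j)‖ ≤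
      (1 + ∑ j, Complex.normSq (ν j)) ^ m := by
  set S := 1 + ∑ j, Complex.normSq (ν j) with hS
  have hS1 : 1 ≤ S := by
    have : 0 ≤ ∑ j, Complex.normSq (ν j) := Finset.sum_nonneg fun j _ => Complex.normSq_nonneg _
    linarith
  have hs1 : 1 ≤ √S := Real.one_le_sqrt.mpr hS1
  have hj : ∀ j, ‖ν j‖ ≤ √S := by
    intro j
    apply Real.le_sqrt_of_sq_le
    rw [← Complex.normSq_eq_norm_sq]
    have := Finset.single_le_sum (f := fun j => Complex.normSq (ν j))
      (fun j _ => Complex.normSq_nonneg _) (Finset.mem_univ j)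
    linarith
  have hp : ∀ γ : Fin n → ℕ, ∑ j, γ j ≤ m → ∏ j, ‖ν j‖ ^ γ j ≤ √S ^ m := by
    intro γ hγ
    calc ∏ j, ‖ν j‖ ^ γ j ≤ ∏ j, √S ^ γ j :=
          Finset.prod_le_prod (fun j _ => by positivity)
            (fun j _ => pow_le_pow_left₀ (norm_nonneg _) (hj j) _)
      _ = √S ^ ∑ j, γ j := Finset.prod_pow_eq_pow_sum _ _ _
      _ ≤ √S ^ m := pow_le_pow_right₀ hs1 hγ
  rw [norm_mul, norm_prod, norm_prod]
  simp only [norm_pow, RCLike.norm_conj]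
  calc _ ≤ √S ^ m * √S ^ m :=
        mul_le_mul (hp α hα) (hp β hβ) (Finset.prod_nonneg fun j _ => by positivity) (by positivity)
    _ = S ^ m := by rw [← mul_pow, Real.mul_self_sqrt (by linarith)]

lemma monoIntegrable {n m : ℕ} (α β : Fin n → ℕ) (hα : ∑ j, α j ≤ m) (hβ : ∑ j, β j ≤ m) :
    Integrable (fun ν : Fin n → ℂ =>
      (∏ j, (starRingEnd ℂ) (ν j) ^ α j) * (∏ j, ν j ^ β j) *
      ((((1 + ∑ j, Complex.normSq (ν j)) ^ (m + n + 1) : ℝ) : ℂ))⁻¹) := by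
  have h0 := integrable_rpow_neg_one_add_norm_sq (E := Fin n → ℂ) (μ := volume)
    (r := 2 * ((n + 1 : ℕ) : ℝ)) (by
      rw [Module.finrank_pi_fintype]; simp [Complex.finrank_real_complex]; linarith)
  refine h0.mono' ?_ (Filter.Eventually.of_forall fun ν => ?_)
  · refine Continuous.aestronglyMeasurable ?_
    refine Continuous.mul (by fun_prop) (Continuous.inv₀ ?_ fun ν => ?_)
    · have := Complex.continuous_normSq
      fun_prop
    · exact_mod_cast (pow_pos (oneAdd_pos ν) _).ne'
  · have hpos := oneAdd_pos ν
    have hnorm : ‖ν‖ ^ 2 ≤ ∑ j, Complex.normSq (ν j) := by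
      have hs : 0 ≤ ∑ j, Complex.normSq (ν j) :=
        Finset.sum_nonneg fun j _ => Complex.normSq_nonneg _
      rw [← Real.le_sqrt (norm_nonneg _) hs, pi_norm_le_iff_of_nonneg (Real.sqrt_nonneg _)]
      intro j
      apply Real.le_sqrt_of_sq_le
      rw [← Complex.normSq_eq_norm_sq]
      exact Finset.single_le_sum (f := fun j => Complex.normSq (ν j))
        (fun j _ => Complex.normSq_nonneg _) (Finset.mem_univ j)
    rw [norm_mul, norm_inv, Complex.norm_real, Real.norm_of_nonneg (pow_pos hpos _).le,
      show (-(2 * ((n + 1 : ℕ) : ℝ)) / 2) = -((n + 1 : ℕ) : ℝ) by ring,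
      Real.rpow_neg (by positivity), Real.rpow_natCast]
    calc _ ≤ (1 + ∑ j, Complex.normSq (ν j)) ^ m *
          ((1 + ∑ j, Complex.normSq (ν j)) ^ (m + n + 1))⁻¹ :=
          mul_le_mul_of_nonneg_right (monoBound α β hα hβ ν) (by positivity)
      _ = ((1 + ∑ j, Complex.normSq (ν j)) ^ (n + 1))⁻¹ := by
          rw [add_assoc, pow_add]; field_simp
      _ ≤ _ := by gcongr

lemma monoInt {n m : ℕ} (α β : Fin n → ℕ) (hα : ∑ j, α j ≤ m) (hβ : ∑ j, β j ≤ m) :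
    ∫ ν : Fin n → ℂ,
      (∏ j, (starRingEnd ℂ) (ν j) ^ α j) * (∏ j, ν j ^ β j) *
      ((((1 + ∑ j, Complex.normSq (ν j)) ^ (m + n + 1) : ℝ) : ℂ))⁻¹ =
    if α = β then (Real.pi ^ n * (∏ j, ((β j).factorial : ℂ)) * (m - ∑ j, β j).factorial /
      (m + n).factorial : ℂ) else 0 := by
  set M : (Fin n → ℂ) → ℂ :=
    fun ν => (∏ j, (starRingEnd ℂ) (ν j) ^ α j) * (∏ j, ν j ^ β j) with hM
  set S : (Fin n → ℂ) → ℝ := fun ν => ∑ j, Complex.normSq (ν j) with hS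
  have hMc : Continuous M := by fun_prop
  have hSc : Continuous S := by
    have := Complex.continuous_normSq
    fun_prop
  have hpos : ∀ ν, 0 < 1 + S ν := fun ν => oneAdd_pos ν
  have hFI := monoIntegrable α β hα hβ
  let f : (Fin n → ℂ) → ℝ → ℂ := fun ν t =>
    M ν * ((t ^ (m + n) * Real.exp (-(t * (1 + S ν))) : ℝ) : ℂ)
  have hfc : Continuous (Function.uncurry f) := by
    simp only [f, Function.uncurry_def]
    fun_prop
  have hI : Integrable (Function.uncurry f)
      ((volume : Measure (Fin n → ℂ)).prod (volume.restrict (Set.Ioi (0:ℝ)))) := by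
    rw [integrable_prod_iff hfc.aestronglyMeasurable]
    refine ⟨Filter.Eventually.of_forall fun ν => ?_, ?_⟩
    · exact ((gammaIntegrable (m + n) (hpos ν)).ofReal (𝕜 := ℂ)).const_mul (M ν)
    · have : ∀ ν, ∫ t in Set.Ioi (0:ℝ), ‖Function.uncurry f (ν, t)‖ =
          (m + n).factorial * ‖M ν * ((((1 + S ν) ^ (m + n + 1) : ℝ) : ℂ))⁻¹‖ := by
        intro ν
        have e : ∫ t in Set.Ioi (0:ℝ), ‖Function.uncurry f (ν, t)‖ =
            ∫ t in Set.Ioi (0:ℝ), ‖M ν‖ * (t ^ (m + n) * Real.exp (-(t * (1 + S ν)))) := by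
          refine setIntegral_congr_fun measurableSet_Ioi fun t ht => ?_
          have ht' : (0:ℝ) < t := ht
          simp only [Function.uncurry, f]
          rw [norm_mul, Complex.norm_real, Real.norm_of_nonneg (by positivity)]
        rw [e, integral_const_mul, gammaInt _ (hpos ν), norm_mul (M ν), norm_inv, Complex.norm_real,
          Real.norm_of_nonneg (pow_pos (hpos ν) _).le]
        ring
      simp_rw [this]
      exact hFI.norm.const_mul _
  have hswap := integral_integral_swap hI
  have hL : ∀ ν, ∫ t in Set.Ioi (0:ℝ), f ν t =
      (m + n).factorial * (M ν * ((((1 + S ν) ^ (m + n + 1) : ℝ) : ℂ))⁻¹) := by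
    intro ν
    simp only [f]
    rw [integral_const_mul, integral_complex_ofReal, gammaInt _ (hpos ν)]
    push_cast
    ring
  have hR : ∫ t in Set.Ioi (0:ℝ), ∫ ν, f ν t =
      if α = β then (Real.pi ^ n * (∏ j, ((β j).factorial : ℂ)) * (m - ∑ j, β j).factorial)
        else 0 := by
    have e : ∫ t in Set.Ioi (0:ℝ), ∫ ν, f ν t = ∫ t in Set.Ioi (0:ℝ),
        (if α = β then (Real.pi ^ n * (∏ j, ((β j).factorial : ℂ))) else 0) *
          ((t ^ (m - ∑ j, β j) * Real.exp (-(t * 1)) : ℝ) : ℂ) := by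
      refine setIntegral_congr_fun measurableSet_Ioi fun t ht => ?_
      have ht' : (0:ℝ) < t := ht
      have e1 : ∀ ν, f ν t = ((t ^ (m + n) * Real.exp (-(t * 1)) : ℝ) : ℂ) *
          (M ν * (Real.exp (-(t * S ν)) : ℂ)) := by
        intro ν
        simp only [f]
        rw [mul_add, neg_add, Real.exp_add]
        push_cast
        ring
      simp_rw [e1]
      rw [integral_const_mul, gaussN α β ht']
      have htc : (t:ℂ) ≠ 0 := by exact_mod_cast ht'.ne'
      split_ifs with h
      · have : m + n = (m - ∑ j, β j) + (∑ j, β j + n) := by omega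
        rw [this, pow_add]
        push_cast
        field_simp
      · simp
    rw [e, integral_const_mul, integral_complex_ofReal, gammaInt _ one_pos]
    split_ifs <;> simp
  rw [hR] at hswap
  simp_rw [hL] at hswap
  rw [integral_const_mul] at hswap
  have hf : ((m + n).factorial : ℂ) ≠ 0 := by exact_mod_cast (Nat.factorial_pos _).ne'
  rw [← mul_right_inj' hf]
  refine hswap.trans ?_
  split_ifs
  · field_simp
  · simp

lemma kernelExpand (n m : ℕ) (μ ν : Fin n → ℂ) :
    (1 + ∑ j, μ j * (starRingEnd ℂ) (ν j)) ^ m =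
      ∑ k ∈ Finset.piAntidiag (Finset.univ : Finset (Fin (n + 1))) m,
        ((Nat.multinomial Finset.univ k : ℂ) * ∏ j : Fin n, μ j ^ k j.succ) *
          ∏ j : Fin n, (starRingEnd ℂ) (ν j) ^ k j.succ := by
  have h := Finset.sum_pow_eq_sum_piAntidiag (Finset.univ : Finset (Fin (n + 1)))
    (Fin.cons 1 (fun j => μ j * (starRingEnd ℂ) (ν j)) : Fin (n + 1) → ℂ) m
  simp only [Fin.sum_univ_succ, Fin.prod_univ_succ, Fin.cons_zero, Fin.cons_succ, one_pow, one_mul,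
    mul_pow, Finset.prod_mul_distrib] at h
  rw [h]
  refine Finset.sum_congr rfl fun k _ => by ring

lemma kernelMono {n m : ℕ} (μ : Fin n → ℂ) (β : Fin n → ℕ) (hβ : ∑ j, β j ≤ m) :
    Integrable (fun ν : Fin n → ℂ => (1 + ∑ j, μ j * (starRingEnd ℂ) (ν j)) ^ m *
      (∏ j, ν j ^ β j) * ((((1 + ∑ j, Complex.normSq (ν j)) ^ (m + n + 1) : ℝ) : ℂ))⁻¹) ∧
    ∫ ν : Fin n → ℂ, (1 + ∑ j, μ j * (starRingEnd ℂ) (ν j)) ^ m *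
      (∏ j, ν j ^ β j) * ((((1 + ∑ j, Complex.normSq (ν j)) ^ (m + n + 1) : ℝ) : ℂ))⁻¹ =
      (Real.pi ^ n * m.factorial / (m + n).factorial : ℂ) * ∏ j, μ j ^ β j := by
  have hk : ∀ k ∈ Finset.piAntidiag (Finset.univ : Finset (Fin (n + 1))) m,
      k 0 + ∑ j : Fin n, k j.succ = m := by
    intro k hk
    rw [← Fin.sum_univ_succ]
    exact (Finset.mem_piAntidiag.mp hk).1
  have e : (fun ν : Fin n → ℂ => (1 + ∑ j, μ j * (starRingEnd ℂ) (ν j)) ^ m *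
      (∏ j, ν j ^ β j) * ((((1 + ∑ j, Complex.normSq (ν j)) ^ (m + n + 1) : ℝ) : ℂ))⁻¹) =
      fun ν => ∑ k ∈ Finset.piAntidiag (Finset.univ : Finset (Fin (n + 1))) m,
        ((Nat.multinomial Finset.univ k : ℂ) * ∏ j : Fin n, μ j ^ k j.succ) *
          ((∏ j : Fin n, (starRingEnd ℂ) (ν j) ^ k j.succ) *
      (∏ j, ν j ^ β j) * ((((1 + ∑ j, Complex.normSq (ν j)) ^ (m + n + 1) : ℝ) : ℂ))⁻¹) := by
    funext ν
    rw [kernelExpand, Finset.sum_mul, Finset.sum_mul]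
    exact Finset.sum_congr rfl fun k _ => by ring
  have hint : ∀ k ∈ Finset.piAntidiag (Finset.univ : Finset (Fin (n + 1))) m,
      Integrable (fun ν : Fin n → ℂ =>
        ((Nat.multinomial Finset.univ k : ℂ) * ∏ j : Fin n, μ j ^ k j.succ) *
          ((∏ j : Fin n, (starRingEnd ℂ) (ν j) ^ k j.succ) *
      (∏ j, ν j ^ β j) * ((((1 + ∑ j, Complex.normSq (ν j)) ^ (m + n + 1) : ℝ) : ℂ))⁻¹)) := by
    intro k hk'
    exact (monoIntegrable (fun j => k j.succ) β (by have := hk k hk'; omega) hβ).const_mul _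
  rw [e]
  refine ⟨integrable_finsetSum _ hint, ?_⟩
  rw [integral_finsetSum _ hint]
  rw [Finset.sum_eq_single (Fin.cons (m - ∑ j, β j) β : Fin (n + 1) → ℕ)]
  · have hs := Nat.multinomial_spec (Finset.univ : Finset (Fin (n + 1)))
      (Fin.cons (m - ∑ j, β j) β : Fin (n + 1) → ℕ)
    rw [integral_const_mul]
    simp only [Fin.cons_succ]
    rw [monoInt β β hβ hβ, if_pos rfl]
    rw [Fin.sum_univ_succ, Fin.prod_univ_succ] at hs
    simp only [Fin.cons_zero, Fin.cons_succ] at hs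
    rw [show m - ∑ j, β j + ∑ j, β j = m by omega] at hs
    rw [← hs]
    push_cast
    ring
  · intro k hk' hne
    rw [integral_const_mul, monoInt (fun j => k j.succ) β (by have := hk k hk'; omega) hβ, if_neg,
      mul_zero]
    intro h
    apply hne
    have h1 := hk k hk'
    have h2 : ∀ j : Fin n, k j.succ = β j := fun j => congrFun h j
    simp only [h2] at h1
    funext i
    refine Fin.cases ?_ (fun j => ?_) i
    · simp only [Fin.cons_zero]; omega
    · simp [h2]
  · intro h
    exfalso
    apply h
    rw [Finset.mem_piAntidiag]
    refine ⟨?_, fun i _ => Finset.mem_univ i⟩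
    rw [Fin.sum_univ_succ]
    simp only [Fin.cons_zero, Fin.cons_succ]
    omega

lemma cconst_eq (n m : ℕ) :
    ((cconst n m : ℝ) : ℂ) = (Real.pi ^ n * m.factorial / (m + n).factorial : ℂ)⁻¹ := by
  have h := monoInt (n := n) (m := m) 0 0 (by simp) (by simp)
  simp only [Pi.zero_apply, pow_zero, Finset.prod_const_one, one_mul, if_true, Nat.factorial_zero,
    Nat.cast_one, mul_one, Finset.sum_const_zero, Nat.sub_zero] at h
  rw [← h, cconst, Complex.ofReal_inv, ← integral_complex_ofReal]
  simp only [Complex.ofReal_inv]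

lemma reproduce (n m : ℕ) (P : MvPolynomial (Fin n) ℂ)
    (hP : P.totalDegree ≤ m) (μ : Fin n → ℂ) :
    ((cconst n m : ℝ) : ℂ) *
          ∫ ν : Fin n → ℂ, (1 + ∑ j, μ j * (starRingEnd ℂ) (ν j)) ^ m *
            MvPolynomial.eval ν P *
            ((((1 + ∑ j, Complex.normSq (ν j)) ^ (m + n + 1) : ℝ) : ℂ))⁻¹ =
      MvPolynomial.eval μ P := by
  have hdeg : ∀ d ∈ P.support, ∑ j, d j ≤ m := by
    intro d hd
    have := MvPolynomial.le_totalDegree hd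
    rw [Finsupp.sum_fintype _ _ (fun _ => rfl)] at this
    exact this.trans hP
  have e : ∀ ν : Fin n → ℂ, (1 + ∑ j, μ j * (starRingEnd ℂ) (ν j)) ^ m *
            MvPolynomial.eval ν P *
            ((((1 + ∑ j, Complex.normSq (ν j)) ^ (m + n + 1) : ℝ) : ℂ))⁻¹ =
      ∑ d ∈ P.support, P.coeff d * ((1 + ∑ j, μ j * (starRingEnd ℂ) (ν j)) ^ m *
      (∏ j, ν j ^ d j) * ((((1 + ∑ j, Complex.normSq (ν j)) ^ (m + n + 1) : ℝ) : ℂ))⁻¹) := by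
    intro ν
    rw [MvPolynomial.eval_eq', Finset.mul_sum, Finset.sum_mul]
    exact Finset.sum_congr rfl fun d _ => by ring
  simp_rw [e]
  rw [integral_finsetSum P.support fun (d : Fin n →₀ ℕ) hd =>
    (kernelMono μ (⇑d) (hdeg d hd)).1.const_mul (P.coeff d)]
  rw [MvPolynomial.eval_eq', Finset.mul_sum]
  refine Finset.sum_congr rfl fun d hd => ?_
  rw [integral_const_mul, (kernelMono μ d (hdeg d hd)).2, cconst_eq]
  have h1 : (Real.pi ^ n * m.factorial / (m + n).factorial : ℂ) ≠ 0 := by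
    have h2 : (Real.pi ^ n * m.factorial / (m + n).factorial : ℝ) ≠ 0 := by positivity
    exact_mod_cast h2
  rw [mul_left_comm, inv_mul_cancel_left₀ h1]

/-- reproducing kernel property.  For every polynomial `Ψ` of total
degree at most `m` and every `μ ∈ ℂⁿ`,
`⟨ψ_μ, Ψ⟩ₘ = c(m) ∫ (1 + Σⱼ μⱼ conj(νⱼ))^m Ψ(ν) (1+‖ν‖²)^{-(m+n+1)} dλ(ν) = Ψ(μ)`;
in particular `⟨ψ_μ, ψ_ν⟩ₘ = ψ_ν(μ) = (1+⟨ν,μ⟩)^m` for all `μ, ν`. -/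
theorem stmt_4 (n m : ℕ) (hn : 1 ≤ n) (P : MvPolynomial (Fin n) ℂ)
    (hP : P.totalDegree ≤ m) (μ : Fin n → ℂ) :
    (wInner n m (psiCS n m μ) (fun ν => MvPolynomial.eval ν P)
        = ((cconst n m : ℝ) : ℂ) *
          ∫ ν : Fin n → ℂ, (1 + ∑ j, μ j * (starRingEnd ℂ) (ν j)) ^ m *
            MvPolynomial.eval ν P *
            ((((1 + ∑ j, Complex.normSq (ν j)) ^ (m + n + 1) : ℝ) : ℂ))⁻¹) ∧
    wInner n m (psiCS n m μ) (fun ν => MvPolynomial.eval ν P)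
        = MvPolynomial.eval μ P ∧
    ∀ ν : Fin n → ℂ, wInner n m (psiCS n m μ) (psiCS n m ν) = psiCS n m ν μ := by
  have h1 : ∀ g : (Fin n → ℂ) → ℂ, wInner n m (psiCS n m μ) g = ((cconst n m : ℝ) : ℂ) *
          ∫ ν : Fin n → ℂ, (1 + ∑ j, μ j * (starRingEnd ℂ) (ν j)) ^ m * g ν *
            ((((1 + ∑ j, Complex.normSq (ν j)) ^ (m + n + 1) : ℝ) : ℂ))⁻¹ := by
    intro g
    simp only [wInner, psiCS, map_pow, map_add, map_one, map_sum, map_mul, Complex.conj_conj]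
  refine ⟨h1 _, (h1 _).trans (reproduce n m P hP μ), fun ν => ?_⟩
  let Q : MvPolynomial (Fin n) ℂ :=
    (1 + ∑ j, MvPolynomial.C ((starRingEnd ℂ) (ν j)) * MvPolynomial.X j) ^ m
  have hQ : Q.totalDegree ≤ m := by
    refine (MvPolynomial.totalDegree_pow _ _).trans ?_
    have : (1 + ∑ j, MvPolynomial.C ((starRingEnd ℂ) (ν j)) * MvPolynomial.X j :
        MvPolynomial (Fin n) ℂ).totalDegree ≤ 1 := by
      refine (MvPolynomial.totalDegree_add _ _).trans (max_le (by simp) ?_)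
      refine MvPolynomial.totalDegree_finsetSum_le fun j _ => ?_
      refine (MvPolynomial.totalDegree_mul _ _).trans ?_
      simp
    calc _ ≤ m * 1 := Nat.mul_le_mul_left m this
      _ = m := mul_one m
  have hev : ∀ x, MvPolynomial.eval x Q = psiCS n m ν x := by
    intro x
    simp [Q, psiCS]
  have := reproduce n m Q hQ μ
  rw [h1]
  simpa only [hev] using this
end

section
/- Resolution of identity: for all polynomial functions Ψ₁, Ψ₂ : ℂⁿ → ℂ of total degree at most m, c(m) ∫_{ℂⁿ} ⟨Ψ₁, ψ_μ⟩ₘ · ⟨ψ_μ, Ψ₂⟩ₘ · (1+‖μ‖²)^{-(m+n+1)} dλ(μ) = ⟨Ψ₁, Ψ₂⟩ₘ. In particular, c(m) ∫_{ℂⁿ} ⟨ψ_ν, ψ_μ⟩ₘ ⟨ψ_μ, ψ_ν⟩ₘ (1+‖μ‖²)^{-(m+n+1)} dλ(μ) = ⟨ψ_ν, ψ_ν⟩ₘ for every ν ∈ ℂⁿ. -/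
open MeasureTheory

namespace CSaux
open MeasureTheory Set

noncomputable def gf (t : ℝ) (a b : ℕ) (z : ℂ) : ℂ :=
  (starRingEnd ℂ) z ^ a * z ^ b * ((Real.exp (-(t * Complex.normSq z)) : ℝ) : ℂ)

lemma norm_gf (t : ℝ) (a b : ℕ) (z : ℂ) :
    ‖gf t a b z‖ = ‖z‖ ^ ((a + b : ℕ) : ℝ) * Real.exp (-t * ‖z‖ ^ (2 : ℝ)) := by
  unfold gf
  rw [norm_mul, norm_mul, norm_pow, norm_pow, RCLike.norm_conj, Real.rpow_natCast, ← pow_add,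
    Complex.norm_real, Real.norm_of_nonneg (Real.exp_pos _).le, Complex.normSq_eq_norm_sq,
    Real.rpow_two, neg_mul]

lemma integral_norm_gf (t : ℝ) (ht : 0 < t) (a b : ℕ) :
    ∫ z, ‖gf t a b z‖ = Real.pi * Real.Gamma (((a : ℝ) + b + 2) / 2) *
      t ^ (-(((a : ℝ) + b + 2) / 2)) := by
  simp_rw [norm_gf]
  rw [Complex.integral_rpow_mul_exp_neg_mul_rpow (by norm_num)
    (lt_of_lt_of_le (by norm_num) (Nat.cast_nonneg _)) ht]
  push_cast
  rw [neg_div]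
  ring

lemma continuous_gf (t : ℝ) (a b : ℕ) : Continuous (gf t a b) := by
  unfold gf
  have := Complex.continuous_normSq
  fun_prop

lemma integrable_gf (t : ℝ) (ht : 0 < t) (a b : ℕ) : Integrable (gf t a b) := by
  rw [← integrable_norm_iff (continuous_gf t a b).aestronglyMeasurable]
  by_contra h
  have h1 := integral_undef h
  rw [integral_norm_gf t ht] at h1
  have : 0 < Real.pi * Real.Gamma (((a : ℝ) + b + 2) / 2) *
      t ^ (-(((a : ℝ) + b + 2) / 2)) := by
    have := Real.Gamma_pos_of_pos (show 0 < ((a : ℝ) + b + 2) / 2 by positivity)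
    positivity
  linarith

lemma integral_gf_ne (t : ℝ) (a b : ℕ) (hab : a ≠ b) : ∫ z, gf t a b z = 0 := by
  set θ : ℝ := Real.pi / ((b : ℝ) - a) with hθ
  have hba : (b : ℝ) - a ≠ 0 := by
    rw [sub_ne_zero]; exact_mod_cast hab.symm
  have h := ((rotation (Circle.exp θ)).measurePreserving).integral_comp
    (rotation (Circle.exp θ)).toHomeomorph.measurableEmbedding (gf t a b)
  have h2 : ∀ z, gf t a b (rotation (Circle.exp θ) z) = (-1) * gf t a b z := by
    intro z
    have hn : Complex.normSq ((Circle.exp θ : ℂ)) = 1 := Circle.normSq_coe _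
    have hu : (starRingEnd ℂ) (Circle.exp θ : ℂ) ^ a * (Circle.exp θ : ℂ) ^ b = -1 := by
      rw [Circle.coe_exp, ← Complex.exp_conj, ← Complex.exp_nat_mul, ← Complex.exp_nat_mul,
        ← Complex.exp_add, ← Complex.exp_pi_mul_I]
      congr 1
      simp only [map_mul, Complex.conj_ofReal, Complex.conj_I]
      have : (Real.pi : ℂ) = θ * (b - a) := by
        rw [hθ]; push_cast
        rw [div_mul_cancel₀]; exact_mod_cast hba
      rw [this]; ring
    unfold gf
    rw [rotation_apply, Complex.normSq_mul, hn, one_mul, map_mul, mul_pow, mul_pow, ← hu]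
    ring
  simp_rw [h2] at h
  rw [integral_const_mul] at h
  linear_combination (-1/2) * h

lemma integral_gf_eq (t : ℝ) (ht : 0 < t) (a : ℕ) :
    ∫ z, gf t a a z = ((Real.pi * a.factorial / t ^ (a + 1) : ℝ) : ℂ) := by
  have h : ∀ z, gf t a a z = ((‖gf t a a z‖ : ℝ) : ℂ) := by
    intro z
    have : gf t a a z = ((Complex.normSq z ^ a * Real.exp (-(t * Complex.normSq z)) : ℝ) : ℂ) := by
      unfold gf
      rw [← mul_pow, mul_comm ((starRingEnd ℂ) z), Complex.mul_conj]; push_cast; rfl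
    rw [this, Complex.norm_real, Real.norm_of_nonneg]
    have := Complex.normSq_nonneg z
    positivity
  rw [integral_congr_ae (Filter.Eventually.of_forall h), integral_complex_ofReal,
    integral_norm_gf t ht]
  congr 1
  have : ((a : ℝ) + a + 2) / 2 = ((a + 1 : ℕ) : ℝ) := by push_cast; ring
  rw [this, Real.rpow_neg ht.le, Real.rpow_natCast]
  push_cast
  rw [Real.Gamma_nat_eq_factorial]; rfl

noncomputable def FF (n m : ℕ) (α β : Fin n → ℕ) (p : ℝ × (Fin n → ℂ)) : ℂ :=
  ((p.1 ^ (m + n) * Real.exp (-p.1) : ℝ) : ℂ) * ∏ j, gf p.1 (α j) (β j) (p.2 j)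

lemma continuous_FF (n m : ℕ) (α β : Fin n → ℕ) : Continuous (FF n m α β) := by
  unfold FF gf
  have := Complex.continuous_normSq
  fun_prop

lemma integrable_FF (n m : ℕ) (α β : Fin n → ℕ) (hα : ∑ j, α j ≤ m) (hβ : ∑ j, β j ≤ m) :
    Integrable (FF n m α β) ((volume.restrict (Ioi (0:ℝ))).prod volume) := by
  rw [integrable_prod_iff (continuous_FF n m α β).aestronglyMeasurable]
  constructor
  · filter_upwards [ae_restrict_mem measurableSet_Ioi] with t ht
    unfold FF
    have hprod : Integrable (fun y : Fin n → ℂ => ∏ j, gf t (α j) (β j) (y j)) :=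
      Integrable.fintype_prod (f := fun j => gf t (α j) (β j))
        (fun j => integrable_gf t ht _ _)
    exact hprod.const_mul ((t ^ (m + n) * Real.exp (-t) : ℝ) : ℂ)
  · set s : ℝ := (m : ℝ) + n + 1 - ∑ j, (((α j : ℝ) + β j + 2) / 2) with hs
    have hs0 : 0 < s := by
      have h1 : ∑ j, (((α j : ℝ) + β j + 2) / 2) = ((∑ j, (α j : ℝ)) + ∑ j, (β j : ℝ)) / 2 + n := by
        rw [← Finset.sum_div, Finset.sum_add_distrib, Finset.sum_add_distrib]
        simp; ring
      have h2 : ∑ j, (α j : ℝ) ≤ m := by exact_mod_cast hα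
      have h3 : ∑ j, (β j : ℝ) ≤ m := by exact_mod_cast hβ
      rw [hs, h1]; linarith
    have hc := (Real.GammaIntegral_convergent hs0).const_mul
      (∏ j, (Real.pi * Real.Gamma (((α j : ℝ) + β j + 2) / 2)))
    refine hc.congr ?_
    filter_upwards [ae_restrict_mem measurableSet_Ioi] with t ht
    have ht' : 0 < t := ht
    unfold FF
    simp_rw [norm_mul, norm_prod]
    rw [integral_const_mul, integral_fintype_prod_volume_eq_prod
      (f := fun j z => ‖gf t (α j) (β j) z‖)]
    simp_rw [integral_norm_gf t ht']
    rw [Finset.prod_mul_distrib (g := fun j => t ^ (-(((α j : ℝ) + β j + 2) / 2))),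
      Complex.norm_real, Real.norm_of_nonneg (by positivity), ← Real.rpow_sum_of_pos ht']
    have : s - 1 = ((m + n : ℕ) : ℝ) + ∑ j, (-(((α j : ℝ) + β j + 2) / 2)) := by
      rw [hs, Finset.sum_neg_distrib]; push_cast; ring
    rw [this, Real.rpow_add ht', Real.rpow_natCast]
    ring

noncomputable def wt (n m : ℕ) (ν : Fin n → ℂ) : ℂ :=
  ((((1 + ∑ j, Complex.normSq (ν j)) ^ (m + n + 1) : ℝ) : ℂ))⁻¹

noncomputable def mono2 (n : ℕ) (α β : Fin n → ℕ) (ν : Fin n → ℂ) : ℂ :=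
  (∏ j, (starRingEnd ℂ) (ν j) ^ (α j)) * ∏ j, (ν j) ^ (β j)

lemma integral_FF_t (n m : ℕ) (α β : Fin n → ℕ) (ν : Fin n → ℂ) :
    ∫ t in Ioi (0:ℝ), FF n m α β (t, ν) =
      ((m + n).factorial : ℂ) * (mono2 n α β ν * wt n m ν) := by
  set r : ℝ := 1 + ∑ j, Complex.normSq (ν j) with hr
  have hr0 : 0 < r := by
    have : 0 ≤ ∑ j, Complex.normSq (ν j) := Finset.sum_nonneg fun j _ => Complex.normSq_nonneg _
    linarith
  have h : ∀ t ∈ Ioi (0:ℝ), FF n m α β (t, ν) = mono2 n α β ν *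
      ((t ^ (((m + n + 1 : ℕ) : ℝ) - 1) * Real.exp (-(r * t)) : ℝ) : ℂ) := by
    intro t ht
    have e1 : ((m + n + 1 : ℕ) : ℝ) - 1 = ((m + n : ℕ) : ℝ) := by push_cast; ring
    have e2 : Real.exp (-(r * t)) = Real.exp (-t) * ∏ j, Real.exp (-(t * Complex.normSq (ν j))) := by
      rw [← Real.exp_sum, ← Real.exp_add, hr, Finset.sum_neg_distrib, ← Finset.mul_sum]
      congr 1; ring
    rw [e1, Real.rpow_natCast, e2]
    unfold FF gf mono2
    simp only [Finset.prod_mul_distrib]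
    push_cast
    ring
  rw [setIntegral_congr_fun measurableSet_Ioi h, integral_const_mul, integral_complex_ofReal,
    Real.integral_rpow_mul_exp_neg_mul_Ioi (by positivity) hr0, Real.rpow_natCast]
  push_cast
  have := Real.Gamma_nat_eq_factorial (m + n)
  push_cast at this
  rw [this]
  unfold wt
  rw [← hr]
  push_cast
  rw [one_div, inv_pow]
  ring

lemma integrable_mono2 (n m : ℕ) (α β : Fin n → ℕ) (hα : ∑ j, α j ≤ m) (hβ : ∑ j, β j ≤ m) :
    Integrable (fun ν => mono2 n α β ν * wt n m ν) := by
  have h := (integrable_FF n m α β hα hβ).integral_prod_right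
  simp_rw [integral_FF_t] at h
  have h2 := h.const_mul (((m + n).factorial : ℂ)⁻¹)
  refine h2.congr (Filter.Eventually.of_forall fun ν => ?_)
  exact inv_mul_cancel_left₀ (by exact_mod_cast Nat.factorial_ne_zero _) _

lemma integral_swap (n m : ℕ) (α β : Fin n → ℕ) (hα : ∑ j, α j ≤ m) (hβ : ∑ j, β j ≤ m) :
    ((m + n).factorial : ℂ) * ∫ ν, mono2 n α β ν * wt n m ν =
      ∫ t in Ioi (0:ℝ), ((t ^ (m + n) * Real.exp (-t) : ℝ) : ℂ) *
        ∏ j, ∫ z, gf t (α j) (β j) z := by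
  have h := integrable_FF n m α β hα hβ
  have h1 := (integral_prod _ h).symm.trans (integral_prod_symm _ h)
  simp_rw [integral_FF_t] at h1
  rw [integral_const_mul] at h1
  rw [← h1]
  congr 1
  ext t
  unfold FF
  simp only
  rw [integral_const_mul, integral_fintype_prod_volume_eq_prod (f := fun j => gf t (α j) (β j))]

lemma integral_mono2_ne (n m : ℕ) (α β : Fin n → ℕ) (hα : ∑ j, α j ≤ m) (hβ : ∑ j, β j ≤ m)
    (hab : α ≠ β) : ∫ ν, mono2 n α β ν * wt n m ν = 0 := by
  obtain ⟨j, hj⟩ := Function.ne_iff.mp hab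
  have h := integral_swap n m α β hα hβ
  have h0 : ∀ t : ℝ, ∏ j, ∫ z, gf t (α j) (β j) z = 0 := fun t =>
    Finset.prod_eq_zero (Finset.mem_univ j) (integral_gf_ne t _ _ hj)
  simp_rw [h0] at h
  simp only [mul_zero, integral_zero] at h
  exact (mul_eq_zero.mp h).resolve_left (by exact_mod_cast Nat.factorial_ne_zero _)

lemma integral_mono2_eq (n m : ℕ) (α : Fin n → ℕ) (hα : ∑ j, α j ≤ m) :
    ((m + n).factorial : ℂ) * ∫ ν, mono2 n α α ν * wt n m ν =
      (Real.pi : ℂ) ^ n * (∏ j, ((α j).factorial : ℂ)) * ((m - ∑ j, α j).factorial : ℂ) := by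
  rw [integral_swap n m α α hα hα]
  obtain ⟨k, hk⟩ := Nat.exists_eq_add_of_le hα
  have h : ∀ t ∈ Ioi (0:ℝ), ((t ^ (m + n) * Real.exp (-t) : ℝ) : ℂ) *
        ∏ j, ∫ z, gf t (α j) (α j) z =
      (Real.pi : ℂ) ^ n * (∏ j, ((α j).factorial : ℂ)) *
        ((Real.exp (-t) * t ^ (((k : ℝ) + 1) - 1) : ℝ) : ℂ) := by
    intro t ht
    have ht' : 0 < t := ht
    have htc : (t : ℂ) ≠ 0 := by exact_mod_cast ht'.ne'
    simp_rw [integral_gf_eq t ht']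
    rw [add_sub_cancel_right, Real.rpow_natCast]
    push_cast
    rw [Finset.prod_div_distrib, Finset.prod_mul_distrib, Finset.prod_pow_eq_pow_sum,
      Finset.sum_add_distrib]
    simp only [Finset.prod_const, Finset.card_univ, Fintype.card_fin, Finset.sum_const,
      smul_eq_mul, mul_one]
    have : (t : ℂ) ^ (m + n) = t ^ k * t ^ (∑ j, α j + n) := by
      rw [← pow_add]; congr 1; omega
    rw [this]
    field_simp
  rw [setIntegral_congr_fun measurableSet_Ioi h, integral_const_mul, integral_complex_ofReal,
    ← Real.Gamma_eq_integral (by positivity), Real.Gamma_nat_eq_factorial]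
  have : m - ∑ j, α j = k := by omega
  rw [this]
  push_cast; rfl

lemma conj_psi (n m : ℕ) (μ ν : Fin n → ℂ) :
    (starRingEnd ℂ) (psiCS n m μ ν) = ∑ k ∈ Finset.range (m + 1),
      ∑ α ∈ Finset.piAntidiag (Finset.univ : Finset (Fin n)) k,
        ((m.choose k : ℂ) * (Nat.multinomial Finset.univ α : ℂ) * ∏ j, μ j ^ α j) *
          ∏ j, (starRingEnd ℂ) (ν j) ^ α j := by
  unfold psiCS
  rw [map_pow, map_add, map_one, map_sum, add_comm, add_pow]
  refine Finset.sum_congr rfl fun k _ => ?_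
  rw [Finset.sum_pow_eq_sum_piAntidiag, one_pow, mul_one, Finset.sum_mul]
  refine Finset.sum_congr rfl fun α _ => ?_
  simp only [map_mul, Complex.conj_conj, mul_pow, Finset.prod_mul_distrib]
  ring

lemma cconst_eq (n m : ℕ) : (cconst n m : ℂ) * ((Real.pi : ℂ) ^ n * (m.factorial : ℂ)) =
    ((m + n).factorial : ℂ) := by
  have h := integral_mono2_eq n m 0 (by simp)
  have e : ∀ ν : Fin n → ℂ, mono2 n 0 0 ν * wt n m ν =
      ((((1 + ∑ j, Complex.normSq (ν j)) ^ (m + n + 1))⁻¹ : ℝ) : ℂ) := by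
    intro ν; simp [mono2, wt]
  simp_rw [e] at h
  rw [integral_complex_ofReal] at h
  simp only [Pi.zero_apply, Nat.factorial_zero, Nat.cast_one, Finset.prod_const_one, mul_one,
    Finset.sum_const_zero, Nat.sub_zero] at h
  unfold cconst
  rw [← h, Complex.ofReal_inv]
  have hne : ((∫ ν : Fin n → ℂ, ((1 + ∑ j, Complex.normSq (ν j)) ^ (m + n + 1))⁻¹ : ℝ) : ℂ) ≠ 0 := by
    intro h0
    rw [h0, mul_zero] at h
    have : (Real.pi : ℂ) ^ n * (m.factorial : ℂ) ≠ 0 := by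
      refine mul_ne_zero (pow_ne_zero _ (by exact_mod_cast Real.pi_ne_zero)) ?_
      exact_mod_cast Nat.factorial_ne_zero _
    exact this h.symm
  rw [mul_left_comm, inv_mul_cancel₀ hne, mul_one]

lemma expand_mono (n m : ℕ) (μ : Fin n → ℂ) (β : Fin n → ℕ) (ν : Fin n → ℂ) :
    (starRingEnd ℂ) (psiCS n m μ ν) * (∏ j, ν j ^ β j) * wt n m ν =
    ∑ k ∈ Finset.range (m + 1),
      ∑ α ∈ Finset.piAntidiag (Finset.univ : Finset (Fin n)) k,
        ((m.choose k : ℂ) * (Nat.multinomial Finset.univ α : ℂ) * ∏ j, μ j ^ α j) *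
          (mono2 n α β ν * wt n m ν) := by
  rw [conj_psi, Finset.sum_mul, Finset.sum_mul]
  refine Finset.sum_congr rfl fun k _ => ?_
  rw [Finset.sum_mul, Finset.sum_mul]
  refine Finset.sum_congr rfl fun α _ => ?_
  unfold mono2
  ring

lemma integrable_term (n m : ℕ) (β : Fin n → ℕ) (hβ : ∑ j, β j ≤ m) (c : (Fin n → ℕ) → ℂ)
    (k : ℕ) (hk : k ∈ Finset.range (m + 1)) (α : Fin n → ℕ)
    (hα : α ∈ Finset.piAntidiag (Finset.univ : Finset (Fin n)) k) :
    Integrable (fun ν => c α * (mono2 n α β ν * wt n m ν)) := by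
  have h1 : ∑ j, α j = k := (Finset.mem_piAntidiag.mp hα).1
  have h2 := Finset.mem_range.mp hk
  exact (integrable_mono2 n m α β (by omega) hβ).const_mul _

lemma integrable_psi_mono (n m : ℕ) (μ : Fin n → ℂ) (β : Fin n → ℕ) (hβ : ∑ j, β j ≤ m) :
    Integrable (fun ν => (starRingEnd ℂ) (psiCS n m μ ν) * (∏ j, ν j ^ β j) * wt n m ν) := by
  simp_rw [expand_mono]
  refine integrable_finsetSum _ fun k hk => integrable_finsetSum _ fun α hα => ?_
  exact integrable_term n m β hβ
    (fun α => (m.choose k : ℂ) * (Nat.multinomial Finset.univ α : ℂ) * ∏ j, μ j ^ α j) k hk α hα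

lemma repro_mono (n m : ℕ) (μ : Fin n → ℂ) (β : Fin n → ℕ) (hβ : ∑ j, β j ≤ m) :
    (cconst n m : ℂ) * ∫ ν, (starRingEnd ℂ) (psiCS n m μ ν) * (∏ j, ν j ^ β j) * wt n m ν =
      ∏ j, μ j ^ β j := by
  simp_rw [expand_mono]
  rw [integral_finsetSum _ fun k hk => integrable_finsetSum _ fun α hα =>
    integrable_term n m β hβ
      (fun α => (m.choose k : ℂ) * (Nat.multinomial Finset.univ α : ℂ) * ∏ j, μ j ^ α j) k hk α hα]
  have hin : ∀ k ∈ Finset.range (m + 1),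
      ∫ ν, ∑ α ∈ Finset.piAntidiag (Finset.univ : Finset (Fin n)) k,
        ((m.choose k : ℂ) * (Nat.multinomial Finset.univ α : ℂ) * ∏ j, μ j ^ α j) *
          (mono2 n α β ν * wt n m ν) =
      ∑ α ∈ Finset.piAntidiag (Finset.univ : Finset (Fin n)) k,
        if α = β then ((m.choose k : ℂ) * (Nat.multinomial Finset.univ β : ℂ) * ∏ j, μ j ^ β j) *
          ∫ ν, mono2 n β β ν * wt n m ν else 0 := by
    intro k hk
    rw [integral_finsetSum _ fun α hα => integrable_term n m β hβ
      (fun α => (m.choose k : ℂ) * (Nat.multinomial Finset.univ α : ℂ) * ∏ j, μ j ^ α j) k hk α hα]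
    refine Finset.sum_congr rfl fun α hα => ?_
    rw [integral_const_mul]
    split_ifs with h
    · rw [h]
    · have h1 : ∑ j, α j = k := (Finset.mem_piAntidiag.mp hα).1
      have h2 := Finset.mem_range.mp hk
      rw [integral_mono2_ne n m α β (by omega) hβ h, mul_zero]
  rw [Finset.sum_congr rfl hin]
  simp only [Finset.sum_ite_eq', Finset.mem_piAntidiag, Finset.mem_univ, implies_true, and_true]
  rw [Finset.sum_ite_eq, if_pos (Finset.mem_range.mpr (Nat.lt_succ_of_le hβ))]
  have hI := integral_mono2_eq n m β hβ
  have hc := cconst_eq n m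
  have hms : (∏ j, ((β j).factorial : ℂ)) * (Nat.multinomial Finset.univ β : ℂ) =
      ((∑ j, β j).factorial : ℂ) := by exact_mod_cast Nat.multinomial_spec Finset.univ β
  have hch : (m.choose (∑ j, β j) : ℂ) * ((∑ j, β j).factorial : ℂ) *
      ((m - ∑ j, β j).factorial : ℂ) = (m.factorial : ℂ) := by
    exact_mod_cast Nat.choose_mul_factorial_mul_factorial hβ
  have hne : ((m + n).factorial : ℂ) ≠ 0 := by exact_mod_cast Nat.factorial_ne_zero _
  apply mul_left_cancel₀ hne
  linear_combination ((cconst n m : ℂ) * (m.choose (∑ j, β j) : ℂ) *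
    (Nat.multinomial Finset.univ β : ℂ) * ∏ j, μ j ^ β j) * hI +
    ((cconst n m : ℂ) * (m.choose (∑ j, β j) : ℂ) * (∏ j, μ j ^ β j) * (Real.pi : ℂ) ^ n *
      ((m - ∑ j, β j).factorial : ℂ)) * hms +
    ((cconst n m : ℂ) * (∏ j, μ j ^ β j) * (Real.pi : ℂ) ^ n) * hch +
    (∏ j, μ j ^ β j) * hc

lemma repro (n m : ℕ) (μ : Fin n → ℂ) (P : MvPolynomial (Fin n) ℂ) (hP : P.totalDegree ≤ m) :
    wInner n m (psiCS n m μ) (fun ν => MvPolynomial.eval ν P) = MvPolynomial.eval μ P := by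
  have hdeg : ∀ d ∈ P.support, ∑ j, d j ≤ m := by
    intro d hd
    have := MvPolynomial.le_totalDegree hd
    rw [Finsupp.sum_fintype _ _ (fun _ => rfl)] at this
    exact this.trans hP
  have e : ∀ ν : Fin n → ℂ, (starRingEnd ℂ) (psiCS n m μ ν) * MvPolynomial.eval ν P *
      ((((1 + ∑ j, Complex.normSq (ν j)) ^ (m + n + 1) : ℝ) : ℂ))⁻¹ =
      ∑ d ∈ P.support, P.coeff d *
        ((starRingEnd ℂ) (psiCS n m μ ν) * (∏ j, ν j ^ d j) * wt n m ν) := by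
    intro ν
    rw [MvPolynomial.eval_eq', Finset.mul_sum, Finset.sum_mul]
    refine Finset.sum_congr rfl fun d _ => ?_
    unfold wt
    ring
  unfold wInner
  simp_rw [e]
  rw [integral_finsetSum P.support fun (d : Fin n →₀ ℕ) hd =>
      (integrable_psi_mono n m μ (fun j => d j) (hdeg d hd)).const_mul (P.coeff d),
    MvPolynomial.eval_eq', Finset.mul_sum]
  refine Finset.sum_congr rfl fun d hd => ?_
  rw [integral_const_mul, mul_left_comm, repro_mono n m μ d (hdeg d hd)]

lemma wInner_conj (n m : ℕ) (f g : (Fin n → ℂ) → ℂ) :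
    wInner n m f g = (starRingEnd ℂ) (wInner n m g f) := by
  unfold wInner
  rw [map_mul, Complex.conj_ofReal, ← integral_conj]
  congr 2
  ext ν
  rw [map_mul, map_mul, Complex.conj_conj, map_inv₀, Complex.conj_ofReal]
  ring

lemma resolution (n m : ℕ) (P₁ P₂ : MvPolynomial (Fin n) ℂ)
    (hP₁ : P₁.totalDegree ≤ m) (hP₂ : P₂.totalDegree ≤ m) :
    (((cconst n m : ℝ) : ℂ) *
        ∫ μ : Fin n → ℂ,
          wInner n m (fun ν => MvPolynomial.eval ν P₁) (psiCS n m μ) *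
            wInner n m (psiCS n m μ) (fun ν => MvPolynomial.eval ν P₂) *
            ((((1 + ∑ j, Complex.normSq (μ j)) ^ (m + n + 1) : ℝ) : ℂ))⁻¹
      = wInner n m (fun ν => MvPolynomial.eval ν P₁) (fun ν => MvPolynomial.eval ν P₂)) := by
  have h : ∀ μ, wInner n m (fun ν => MvPolynomial.eval ν P₁) (psiCS n m μ) =
      (starRingEnd ℂ) (MvPolynomial.eval μ P₁) := by
    intro μ; rw [wInner_conj, repro n m μ P₁ hP₁]
  simp_rw [h, repro n m _ P₂ hP₂]
  rfl

lemma psi_poly (n m : ℕ) (μ : Fin n → ℂ) : ∃ P : MvPolynomial (Fin n) ℂ, P.totalDegree ≤ m ∧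
    psiCS n m μ = fun ν => MvPolynomial.eval ν P := by
  refine ⟨(1 + ∑ j, MvPolynomial.C ((starRingEnd ℂ) (μ j)) * MvPolynomial.X j) ^ m, ?_, ?_⟩
  · refine (MvPolynomial.totalDegree_pow _ _).trans ?_
    have : (1 + ∑ j, MvPolynomial.C ((starRingEnd ℂ) (μ j)) * MvPolynomial.X j :
        MvPolynomial (Fin n) ℂ).totalDegree ≤ 1 := by
      refine (MvPolynomial.totalDegree_add _ _).trans (max_le (by simp) ?_)
      refine MvPolynomial.totalDegree_finsetSum_le fun j _ => ?_
      refine (MvPolynomial.totalDegree_mul _ _).trans ?_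
      simp
    nlinarith
  · ext ν
    simp [psiCS]

end CSaux

/-- resolution of the identity.  For all polynomials `Ψ₁, Ψ₂` of
total degree at most `m`,
`c(m) ∫ ⟨Ψ₁,ψ_μ⟩ₘ ⟨ψ_μ,Ψ₂⟩ₘ (1+‖μ‖²)^{-(m+n+1)} dλ(μ) = ⟨Ψ₁,Ψ₂⟩ₘ`;
in particular
`c(m) ∫ ⟨ψ_ν,ψ_μ⟩ₘ ⟨ψ_μ,ψ_ν⟩ₘ (1+‖μ‖²)^{-(m+n+1)} dλ(μ) = ⟨ψ_ν,ψ_ν⟩ₘ`. -/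
theorem stmt_5 (n m : ℕ) (hn : 1 ≤ n) (P₁ P₂ : MvPolynomial (Fin n) ℂ)
    (hP₁ : P₁.totalDegree ≤ m) (hP₂ : P₂.totalDegree ≤ m) :
    (((cconst n m : ℝ) : ℂ) *
        ∫ μ : Fin n → ℂ,
          wInner n m (fun ν => MvPolynomial.eval ν P₁) (psiCS n m μ) *
            wInner n m (psiCS n m μ) (fun ν => MvPolynomial.eval ν P₂) *
            ((((1 + ∑ j, Complex.normSq (μ j)) ^ (m + n + 1) : ℝ) : ℂ))⁻¹
      = wInner n m (fun ν => MvPolynomial.eval ν P₁) (fun ν => MvPolynomial.eval ν P₂)) ∧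
    ∀ ν : Fin n → ℂ,
      ((cconst n m : ℝ) : ℂ) *
        ∫ μ : Fin n → ℂ,
          wInner n m (psiCS n m ν) (psiCS n m μ) *
            wInner n m (psiCS n m μ) (psiCS n m ν) *
            ((((1 + ∑ j, Complex.normSq (μ j)) ^ (m + n + 1) : ℝ) : ℂ))⁻¹
      = wInner n m (psiCS n m ν) (psiCS n m ν) := by
  refine ⟨CSaux.resolution n m P₁ P₂ hP₁ hP₂, fun ν => ?_⟩
  obtain ⟨P, hP, h⟩ := CSaux.psi_poly n m ν
  rw [h]
  exact CSaux.resolution n m P P hP hP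
end

section
/- Transition amplitude along a path as holonomy: fix an integer N ≥ 1 and define the transition probability amplitude a_N(v,z) = (1+⟨v,z⟩)^N / ((1+‖v‖²)^{N/2}·(1+‖z‖²)^{N/2}) for v, z ∈ ℂⁿ, where ⟨v,z⟩ = Σⱼ conj(vⱼ)zⱼ. Then for every continuously differentiable path γ : [0,1] → ℂⁿ, the products over uniform partitions converge: lim_{k→∞} Π_{i=0}^{k−1} a_N(γ((i+1)/k), γ(i/k)) = exp( i·N·∫₀¹ Im(Σⱼ conj(γⱼ′(t))·γⱼ(t)) / (1+‖γ(t)‖²) dt ), i.e. the limit equals exp(i ∫_γ Im(∂̄ log K)) for the kernel K(z̄,z) = (1+‖z‖²)^N. -/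
open MeasureTheory

/-- The transition probability amplitude
`a_N(v,z) = (1+⟨v,z⟩)^N / ((1+‖v‖²)^{N/2} (1+‖z‖²)^{N/2})` for the kernel
`K(v̄,z) = (1+⟨v,z⟩)^N` on the affine chart of `ℂPⁿ`. -/
noncomputable def transAmp (n N : ℕ) (v z : Fin n → ℂ) : ℂ :=
  (1 + ∑ j, (starRingEnd ℂ) (v j) * z j) ^ N /
    ((Real.sqrt ((1 + ∑ j, Complex.normSq (v j)) ^ N) *
        Real.sqrt ((1 + ∑ j, Complex.normSq (z j)) ^ N) : ℝ) : ℂ)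

lemma prod_tendsto_one (c c' : ℝ → ℝ → ℂ)
    (h1 : ∀ t ∈ Set.Icc (0:ℝ) 1, c t t = 1)
    (hd : ∀ s ∈ Set.Icc (0:ℝ) 1, ∀ t ∈ Set.Icc (0:ℝ) 1,
      HasDerivAt (fun s => c s t) (c' s t) s)
    (hc : ContinuousOn (fun p : ℝ × ℝ => c' p.1 p.2) (Set.Icc (0:ℝ) 1 ×ˢ Set.Icc (0:ℝ) 1))
    (h0 : ∀ t ∈ Set.Icc (0:ℝ) 1, c' t t = 0) :
    Filter.Tendsto (fun k : ℕ => ∏ i ∈ Finset.range k, c (((i:ℝ) + 1) / k) ((i:ℝ) / k))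
      Filter.atTop (nhds 1) := by
  have huc := (isCompact_Icc.prod isCompact_Icc).uniformContinuousOn_of_continuous hc
  rw [Metric.uniformContinuousOn_iff] at huc
  have key : ∀ ε > 0, ∀ᶠ k : ℕ in Filter.atTop,
      ‖∏ i ∈ Finset.range k, c (((i:ℝ) + 1) / k) ((i:ℝ) / k) - 1‖ ≤ Real.exp ε - 1 := by
    intro ε hε
    obtain ⟨δ, hδ, H⟩ := huc ε hε
    obtain ⟨K, hK⟩ := exists_nat_gt (1 / δ)
    filter_upwards [Filter.eventually_ge_atTop (K + 1)] with k hk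
    have hk0 : (0:ℝ) < k := by
      have : 0 < k := by omega
      exact_mod_cast this
    have hkδ : 1 / (k:ℝ) < δ := by
      have : (K:ℝ) + 1 ≤ k := by exact_mod_cast hk
      rw [div_lt_iff₀ hδ] at hK
      rw [div_lt_iff₀ hk0]
      nlinarith
    have hi : ∀ i ∈ Finset.range k, ‖c (((i:ℝ) + 1) / k) ((i:ℝ) / k) - 1‖ ≤ ε * (1 / k) := by
      intro i hi
      have hik : (i:ℝ) + 1 ≤ k := by
        have := Finset.mem_range.1 hi
        exact_mod_cast this
      have hi0 : (0:ℝ) ≤ i := Nat.cast_nonneg i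
      set t := (i:ℝ) / k with ht
      have hs : ((i:ℝ) + 1) / k = t + 1 / k := by rw [ht]; ring
      have ht0 : 0 ≤ t := by positivity
      have ht1 : t + 1 / k ≤ 1 := by rw [← hs, div_le_one hk0]; exact hik
      have hkp : 0 < 1 / (k:ℝ) := by positivity
      have htm : t ∈ Set.Icc (0:ℝ) 1 := ⟨ht0, by linarith⟩
      rw [hs, ← h1 t htm]
      have := norm_image_sub_le_of_norm_deriv_le_segment' (f := fun s => c s t)
        (f' := fun s => c' s t) (a := t) (b := t + 1 / k) (C := ε)
        (fun x hx => (hd x ⟨by linarith [hx.1], by linarith [hx.2]⟩ t htm).hasDerivWithinAt)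
        (fun x hx => by
          have hxm : x ∈ Set.Icc (0:ℝ) 1 := ⟨by linarith [hx.1], by linarith [hx.2]⟩
          have := H (x, t) ⟨hxm, htm⟩ (t, t) ⟨htm, htm⟩ (by
            rw [Prod.dist_eq]
            simp only [dist_self, Real.dist_eq]
            rw [max_eq_left (abs_nonneg _), abs_of_nonneg (by linarith [hx.1])]
            linarith [hx.2])
          simp only [h0 t htm, dist_zero_right] at this
          exact this.le)
        (t + 1 / k) ⟨by linarith, le_rfl⟩
      simpa using this
    have h2 := Finset.norm_prod_one_add_sub_one_le (Finset.range k)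
      (fun i : ℕ => c (((i:ℝ) + 1) / k) ((i:ℝ) / k) - 1)
    simp only [add_sub_cancel] at h2
    refine h2.trans ?_
    have h3 := Finset.sum_le_sum hi
    simp only [Finset.sum_const, Finset.card_range, nsmul_eq_mul] at h3
    have h4 : (k:ℝ) * (ε * (1 / k)) = ε := by field_simp
    rw [h4] at h3
    gcongr
  rw [Metric.tendsto_nhds]
  intro η hη
  have hl : 0 < Real.log (1 + η / 2) := Real.log_pos (by linarith)
  filter_upwards [key _ hl] with k hk
  rw [Real.exp_log (by linarith)] at hk
  rw [dist_eq_norm]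
  linarith

/-- transition amplitude along a path as holonomy.  For every
continuously differentiable path `γ : [0,1] → ℂⁿ`, the products of transition
amplitudes over uniform partitions converge:
`lim_{k→∞} Π_{i=0}^{k−1} a_N(γ((i+1)/k), γ(i/k))
  = exp(iN ∫₀¹ Im(Σⱼ conj(γⱼ′(t)) γⱼ(t))/(1+‖γ(t)‖²) dt)`,
i.e. the limit equals `exp(i ∫_γ Im(∂̄ log K))` for `K(z̄,z) = (1+‖z‖²)^N`. -/
theorem stmt_9 (n N : ℕ) (hn : 1 ≤ n) (hN : 1 ≤ N)
    (γ γ' : ℝ → Fin n → ℂ)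
    (hderiv : ∀ t ∈ Set.Icc (0 : ℝ) 1, HasDerivAt γ (γ' t) t)
    (hcont : ContinuousOn γ' (Set.Icc (0 : ℝ) 1)) :
    Filter.Tendsto
      (fun k : ℕ => ∏ i ∈ Finset.range k,
        transAmp n N (γ (((i : ℝ) + 1) / (k : ℝ))) (γ ((i : ℝ) / (k : ℝ))))
      Filter.atTop
      (nhds (Complex.exp (Complex.I * (N : ℂ) *
        ((∫ t in (0 : ℝ)..1,
            (∑ j, (starRingEnd ℂ) (γ' t j) * γ t j).im /
              (1 + ∑ j, Complex.normSq (γ t j)) : ℝ) : ℂ)))) := by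
  classical
  set f : ℝ → ℝ := fun t => (∑ j, (starRingEnd ℂ) (γ' t j) * γ t j).im /
              (1 + ∑ j, Complex.normSq (γ t j)) with hf
  set q : ℝ → ℝ := fun t => 1 + ∑ j, Complex.normSq (γ t j) with hq
  have hq0 : ∀ t, 0 < q t := fun t => by
    have : 0 ≤ ∑ j, Complex.normSq (γ t j) := Finset.sum_nonneg fun j _ => Complex.normSq_nonneg _
    simp only [hq]; linarith
  have hγc : ContinuousOn γ (Set.Icc 0 1) :=
    fun t ht => (hderiv t ht).continuousAt.continuousWithinAt
  have hγj : ∀ j, ContinuousOn (fun t => γ t j) (Set.Icc 0 1) := fun j =>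
    (continuous_apply j).comp_continuousOn hγc
  have hγ'j : ∀ j, ContinuousOn (fun t => γ' t j) (Set.Icc 0 1) := fun j =>
    (continuous_apply j).comp_continuousOn hcont
  have hqc : ContinuousOn q (Set.Icc 0 1) := by
    refine continuousOn_const.add (continuousOn_finsetSum _ fun j _ => ?_)
    exact Complex.continuous_normSq.comp_continuousOn (hγj j)
  have hfc : ContinuousOn f (Set.Icc 0 1) := by
    refine ContinuousOn.div ?_ hqc (fun t _ => (hq0 t).ne')
    refine Complex.continuous_im.comp_continuousOn (continuousOn_finsetSum _ fun j _ => ?_)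
    exact (Complex.continuous_conj.comp_continuousOn (hγ'j j)).mul (hγj j)
  -- continuous extension
  set g : ℝ → ℝ := Set.IccExtend (zero_le_one (α := ℝ)) (fun t : Set.Icc (0:ℝ) 1 => f t) with hg
  have hgc : Continuous g := hfc.domRestrict.Icc_extend'
  have hgf : ∀ t ∈ Set.Icc (0:ℝ) 1, g t = f t := fun t ht => by
    simp [hg, Set.IccExtend_of_mem _ _ ht]
  set θ : ℝ → ℝ := fun s => ∫ t in (0:ℝ)..s, g t with hθ
  have hθd : ∀ s, HasDerivAt θ (g s) s := fun s => hgc.integral_hasStrictDerivAt 0 s |>.hasDerivAt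
  have hθc : Continuous θ := continuous_iff_continuousAt.2 fun s => (hθd s).continuousAt
  have hθ1 : ∫ t in (0:ℝ)..1, f t = θ 1 := by
    refine intervalIntegral.integral_congr fun t ht => ?_
    rw [Set.uIcc_of_le zero_le_one] at ht
    exact (hgf t ht).symm
  have hθ0 : θ 0 = 0 := by simp [hθ]
  set B : ℝ → ℝ → ℂ := fun s t => 1 + ∑ j, (starRingEnd ℂ) (γ s j) * γ t j with hB
  set P : ℝ → ℝ → ℂ := fun s t => ∑ j, (starRingEnd ℂ) (γ' s j) * γ t j with hP
  have hBq : ∀ t, B t t = q t := fun t => by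
    simp only [hB, hq]; push_cast
    congr 1
    exact Finset.sum_congr rfl fun j _ => by rw [Complex.normSq_eq_conj_mul_self]
  set r : ℝ → ℝ := fun t => Real.sqrt (q t) with hr
  have hr0 : ∀ t, 0 < r t := fun t => Real.sqrt_pos.2 (hq0 t)
  have hrr : ∀ t, r t * r t = q t := fun t => Real.mul_self_sqrt (hq0 t).le
  have hrc : ContinuousOn r (Set.Icc 0 1) := Real.continuous_sqrt.comp_continuousOn hqc
  have hBd : ∀ s ∈ Set.Icc (0:ℝ) 1, ∀ t, HasDerivAt (fun s => B s t) (P s t) s := by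
    intro s hs t
    have h := hasDerivAt_pi.1 (hderiv s hs)
    refine HasDerivAt.const_add _ (HasDerivAt.fun_sum fun j _ => ?_)
    exact ((h j).star).mul_const (γ t j)
  have hqd : ∀ s ∈ Set.Icc (0:ℝ) 1, HasDerivAt q (2 * (P s s).re) s := by
    intro s hs
    have h := hasDerivAt_pi.1 (hderiv s hs)
    have hre : ∀ j, HasDerivAt (fun s => (γ s j).re) (γ' s j).re s := fun j =>
      (Complex.reCLM.hasFDerivAt.comp_hasDerivAt s (h j))
    have him : ∀ j, HasDerivAt (fun s => (γ s j).im) (γ' s j).im s := fun j =>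
      (Complex.imCLM.hasFDerivAt.comp_hasDerivAt s (h j))
    simp only [hq, hP, Complex.normSq_apply]
    refine HasDerivAt.const_add _ ?_
    rw [Complex.re_sum, Finset.mul_sum]
    refine HasDerivAt.fun_sum fun j _ => ?_
    refine (((hre j).mul (hre j)).add ((him j).mul (him j))).congr_deriv ?_
    simp; ring
  have hrd : ∀ s ∈ Set.Icc (0:ℝ) 1, HasDerivAt r ((P s s).re / r s) s := by
    intro s hs
    refine ((hqd s hs).sqrt (hq0 s).ne').congr_deriv ?_
    simp only [hr]; ring
  set e : ℝ → ℂ := fun s => Complex.exp (Complex.I * θ s) with he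
  have he0 : ∀ s, e s ≠ 0 := fun s => Complex.exp_ne_zero _
  have hed : ∀ s ∈ Set.Icc (0:ℝ) 1, HasDerivAt e (e s * (Complex.I * f s)) s := by
    intro s hs
    have := ((hθd s).ofReal_comp.const_mul Complex.I).cexp
    rwa [hgf s hs] at this
  have hec : Continuous e := by fun_prop
  have hrC : ∀ s, (r s : ℂ) ≠ 0 := fun s => by exact_mod_cast (hr0 s).ne'
  set c : ℝ → ℝ → ℂ := fun s t => B s t / (r s * e s) * (e t / r t) with hcdef
  set c' : ℝ → ℝ → ℂ := fun s t =>
    (P s t - B s t * (P s s / q s)) / (r s * e s) * (e t / r t) with hc'def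
  have hlim := prod_tendsto_one c c' (by
      intro t _
      have h1 := hrC t
      have h2 := he0 t
      simp only [hcdef, hBq, ← hrr]
      push_cast
      field_simp) (by
      intro s hs t _
      have h1 := hrC s
      have h2 := he0 s
      refine (((hBd s hs t).div ((hrd s hs).ofReal_comp.mul (hed s hs))
        (mul_ne_zero h1 h2)).mul_const _).congr_deriv ?_
      simp only [hc'def]
      congr 1
      have hfs : f s = (P s s).im / q s := rfl
      rw [hfs, ← hrr]
      have hPs : P s s = (P s s).re + (P s s).im * Complex.I := (Complex.re_add_im _).symm
      generalize (P s s).re = x at *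
      generalize (P s s).im = y at *
      rw [hPs]
      push_cast
      simp only [Pi.mul_apply]
      field_simp) (by
      have m1 : Set.MapsTo (Prod.fst : ℝ × ℝ → ℝ) (Set.Icc (0:ℝ) 1 ×ˢ Set.Icc (0:ℝ) 1)
        (Set.Icc 0 1) := fun p hp => hp.1
      have m2 : Set.MapsTo (Prod.snd : ℝ × ℝ → ℝ) (Set.Icc (0:ℝ) 1 ×ˢ Set.Icc (0:ℝ) 1)
        (Set.Icc 0 1) := fun p hp => hp.2
      have l : ∀ {h : ℝ → ℂ}, ContinuousOn h (Set.Icc 0 1) →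
        ContinuousOn (fun p : ℝ × ℝ => h p.1) (Set.Icc (0:ℝ) 1 ×ˢ Set.Icc (0:ℝ) 1) :=
        fun hh => hh.comp continuousOn_fst m1
      have l2 : ∀ {h : ℝ → ℂ}, ContinuousOn h (Set.Icc 0 1) →
        ContinuousOn (fun p : ℝ × ℝ => h p.2) (Set.Icc (0:ℝ) 1 ×ˢ Set.Icc (0:ℝ) 1) :=
        fun hh => hh.comp continuousOn_snd m2
      have cj : ∀ {h : ℝ → ℂ}, ContinuousOn h (Set.Icc 0 1) →
        ContinuousOn (fun p => (starRingEnd ℂ) (h p)) (Set.Icc (0:ℝ) 1) :=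
        fun hh => Complex.continuous_conj.comp_continuousOn hh
      have hrcC : ContinuousOn (fun s => (r s : ℂ)) (Set.Icc 0 1) :=
        Complex.continuous_ofReal.comp_continuousOn hrc
      have hqcC : ContinuousOn (fun s => (q s : ℂ)) (Set.Icc 0 1) :=
        Complex.continuous_ofReal.comp_continuousOn hqc
      have hPc := continuousOn_finsetSum (Finset.univ : Finset (Fin n))
        fun j _ => (l (cj (hγ'j j))).mul (l2 (hγj j))
      have hPsc := continuousOn_finsetSum (Finset.univ : Finset (Fin n))
        fun j _ => (l (cj (hγ'j j))).mul (l (hγj j))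
      have hBc := (continuousOn_const (c := (1:ℂ))).add (continuousOn_finsetSum (Finset.univ : Finset (Fin n))
        fun j _ => (l (cj (hγj j))).mul (l2 (hγj j)))
      have hq0C : ∀ s, (q s : ℂ) ≠ 0 := fun s => by exact_mod_cast (hq0 s).ne'
      exact ((hPc.sub (hBc.mul (hPsc.div (l hqcC) fun p _ => hq0C _))).div
        ((l hrcC).mul (l hec.continuousOn)) fun p _ => mul_ne_zero (hrC _) (he0 _)).mul
        ((l2 hec.continuousOn).div (l2 hrcC) fun p _ => hrC _)) (by
      intro t _
      have hq0C : (q t : ℂ) ≠ 0 := by exact_mod_cast (hq0 t).ne'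
      simp only [hc'def, hBq]
      rw [mul_div_cancel₀ _ hq0C]
      simp)
  have hT : ∀ s t, transAmp n N (γ s) (γ t) = (c s t * (e s / e t)) ^ N := by
    intro s t
    have hs : ∀ t, Real.sqrt (q t ^ N) = r t ^ N := fun t => by
      rw [Real.sqrt_eq_iff_mul_self_eq (pow_nonneg (hq0 t).le _) (pow_nonneg (hr0 t).le _),
        ← mul_pow, hrr]
    have : transAmp n N (γ s) (γ t) =
      B s t ^ N / ((Real.sqrt (q s ^ N) * Real.sqrt (q t ^ N) : ℝ) : ℂ) := rfl
    rw [this, hs, hs, ← mul_pow]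
    push_cast
    rw [← div_pow]
    congr 1
    have h1 := hrC s
    have h2 := he0 s
    have h3 := hrC t
    have h4 := he0 t
    simp only [hcdef]
    field_simp
  have hfin := (hlim.mul_const (e 1)).pow N
  rw [hθ1]
  have hE : (1 * e 1) ^ N = Complex.exp (Complex.I * (N : ℂ) * (θ 1 : ℂ)) := by
    rw [one_mul]
    simp only [he]
    rw [← Complex.exp_nat_mul]
    congr 1; ring
  rw [hE] at hfin
  refine hfin.congr' ?_
  filter_upwards [Filter.eventually_ge_atTop 1] with k hk
  have hk0 : (k:ℝ) ≠ 0 := by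
    have : k ≠ 0 := by omega
    exact_mod_cast this
  simp only [hT]
  have htel : ∀ m : ℕ, ∏ i ∈ Finset.range m, (e (((i:ℝ) + 1) / k) / e ((i:ℝ) / k)) =
      e ((m:ℝ) / k) := by
    intro m
    induction m with
    | zero => simp [he, hθ0]
    | succ m ih =>
      rw [Finset.prod_range_succ, ih, mul_div_cancel₀ _ (he0 _)]
      push_cast
      rfl
  have hprod : ∏ i ∈ Finset.range k, (c (((i:ℝ) + 1) / k) ((i:ℝ) / k) *
      (e (((i:ℝ) + 1) / k) / e ((i:ℝ) / k))) =
      (∏ i ∈ Finset.range k, c (((i:ℝ) + 1) / k) ((i:ℝ) / k)) * e 1 := by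
    rw [Finset.prod_mul_distrib, htel, div_self hk0]
  rw [Finset.prod_pow, hprod]
end
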